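/- For all integers n ≥ 0 and k ≥ 0 one has C(n+k,k)·E[V_n^k] = E[C(n+k−N_{n+k}, k)], where C(a,b) denotes the binomial coefficient; equivalently, C(n+k,k)·E[vol(T_n)^k]/vol(T)^k = Σ_{i=0}^{n+k} C(n+k−i, k)·P(N_{n+k} = i). -/

import Mathlib

open MeasureTheory

noncomputable section

/-- The triangle with vertices (0,0), (1,0), (0,1). -/
def T : Set (ℝ × ℝ) := convexHull ℝ {(0, 0), (1, 0), (0, 1)}

/-- The uniform distribution on `T`: twice Lebesgue measure restricted to `T`. -/
def μT : Measure (ℝ × ℝ) := (2 : ENNReal) • (volume.restrict T)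

/-- Joint law of `n` independent uniform points in `T`. -/
def P (n : ℕ) : Measure (Fin n → ℝ × ℝ) := Measure.pi fun _ => μT

/-- The random convex chain: convex hull of the points together with `(1,0)` and `(0,1)`. -/
def Tchain (n : ℕ) (ω : Fin n → ℝ × ℝ) : Set (ℝ × ℝ) :=
  convexHull ℝ (Set.range ω ∪ {(1, 0), (0, 1)})

/-- Normalized area `V_n = 2 vol(T_n)`. -/
def V (n : ℕ) (ω : Fin n → ℝ × ℝ) : ℝ := 2 * (volume (Tchain n ω)).toReal

/-- Number of vertices of `T_n` other than the two corners. -/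
def N (n : ℕ) (ω : Fin n → ℝ × ℝ) : ℕ :=
  (Set.extremePoints ℝ (Tchain n ω)).ncard - 2

/-- Normalized moments `q_{n,k} = C(n+k,k) E[V_n^k]`. -/
def q (n k : ℕ) : ℝ := ((n + k).choose k : ℝ) * ∫ ω, (V n ω) ^ k ∂ P n

/-- Probability generating function of `N_n`. -/
def G (n : ℕ) (t : ℝ) : ℝ := ∫ ω, t ^ (N n ω) ∂ P n

/-- Harmonic number. -/
def H (j : ℕ) : ℝ := ∑ i ∈ Finset.range j, 1 / ((i : ℝ) + 1)

/-- Generalized harmonic number of order 2. -/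
def H2 (j : ℕ) : ℝ := ∑ i ∈ Finset.range j, 1 / ((i : ℝ) + 1) ^ 2

/-- `c(k,ℓ)`: elementary symmetric polynomial `e_k` of `2/(j(j+1))`, `j = 1,…,ℓ`. -/
def c (k l : ℕ) : ℝ :=
  ∑ S ∈ (Finset.Icc 1 l).powersetCard k, ∏ j ∈ S, 2 / ((j : ℝ) * ((j : ℝ) + 1))

open Set in
lemma T_eq : T = {p : ℝ × ℝ | 0 ≤ p.1 ∧ 0 ≤ p.2 ∧ p.1 + p.2 ≤ 1} := by
  apply Subset.antisymm
  · apply convexHull_min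
    · intro p hp
      simp only [mem_insert_iff, mem_singleton_iff] at hp
      rcases hp with rfl | rfl | rfl <;> norm_num
    · intro x hx y hy a b ha hb hab
      simp only [mem_ofPred_eq, Prod.fst_add, Prod.snd_add, Prod.smul_fst, Prod.smul_snd,
        smul_eq_mul] at *
      refine ⟨?_, ?_, ?_⟩
      · nlinarith [mul_nonneg ha hx.1, mul_nonneg hb hy.1]
      · nlinarith [mul_nonneg ha hx.2.1, mul_nonneg hb hy.2.1]
      · nlinarith [mul_le_mul_of_nonneg_left hx.2.2 ha, mul_le_mul_of_nonneg_left hy.2.2 hb]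
  · rintro ⟨x, y⟩ ⟨hx, hy, hxy⟩
    simp only at hx hy hxy
    rw [T]
    have hc : Convex ℝ (convexHull ℝ ({(0, 0), (1, 0), (0, 1)} : Set (ℝ × ℝ))) :=
      convex_convexHull ℝ _
    have h := hc.sum_mem (t := Finset.univ) (w := ![1 - x - y, x, y])
      (z := ![((0:ℝ), (0:ℝ)), (1, 0), (0, 1)]) (by
        intro i _; fin_cases i <;> simp <;> linarith) (by
        simp [Fin.sum_univ_three]; ring) (by
        intro i _
        apply subset_convexHull
        fin_cases i <;> simp)
    simpa [Fin.sum_univ_three] using h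

lemma T_meas : MeasurableSet T := by
  apply IsClosed.measurableSet
  rw [T]
  apply Set.Finite.isClosed_convexHull ℝ
  simp

lemma T_vol : (volume : Measure (ℝ × ℝ)) T = ENNReal.ofReal (1/2) := by
  rw [Measure.volume_eq_prod, Measure.prod_apply T_meas]
  have h : ∀ x : ℝ, volume (Prod.mk x ⁻¹' T)
      = (Set.Icc (0:ℝ) 1).indicator (fun x => ENNReal.ofReal (1 - x)) x := by
    intro x
    by_cases hx : x ∈ Set.Icc (0:ℝ) 1
    · have : Prod.mk x ⁻¹' T = Set.Icc 0 (1 - x) := by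
        ext y
        simp only [T_eq, Set.mem_preimage, Set.mem_ofPred_eq, Set.mem_Icc] at *
        constructor
        · rintro ⟨_, h1, h2⟩; exact ⟨h1, by linarith⟩
        · rintro ⟨h1, h2⟩; exact ⟨hx.1, h1, by linarith⟩
      rw [this, Set.indicator_of_mem hx, Real.volume_Icc, sub_zero]
    · have : Prod.mk x ⁻¹' T = ∅ := by
        ext y
        simp only [T_eq, Set.mem_preimage, Set.mem_ofPred_eq, Set.mem_Icc,
          Set.mem_empty_iff_false, iff_false] at *
        rintro ⟨h0, h1, h2⟩; exact hx ⟨h0, by linarith⟩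
      rw [this, Set.indicator_of_notMem hx, measure_empty]
  simp_rw [h]
  rw [lintegral_indicator measurableSet_Icc, ← ofReal_integral_eq_lintegral_ofReal]
  · rw [integral_Icc_eq_integral_Ioc, ← intervalIntegral.integral_of_le zero_le_one]
    congr 1
    rw [intervalIntegral.integral_sub (by simp) (by simp)]
    norm_num
  · exact (Continuous.continuousOn (by fun_prop)).integrableOn_Icc
  · refine (ae_restrict_iff' measurableSet_Icc).2 (Filter.Eventually.of_forall ?_)
    intro x hx; simp; exact hx.2

instance μT_prob : IsProbabilityMeasure μT := by
  constructor
  rw [μT, Measure.smul_apply, Measure.restrict_apply_univ, T_vol, smul_eq_mul]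
  rw [show (2 : ENNReal) = ENNReal.ofReal 2 by simp, ← ENNReal.ofReal_mul (by norm_num)]
  norm_num

instance μT_noAtoms : NullSingletonClass μT := by
  constructor
  intro x
  simp [μT]

lemma μT_ae_T : ∀ᵐ x ∂μT, x ∈ T := by
  rw [μT]
  exact Measure.ae_smul_measure (ae_restrict_mem T_meas) _

instance P_prob (n : ℕ) : IsProbabilityMeasure (P n) := by
  unfold P; infer_instance

/-- The convex hull of a family of points and the two corners. -/
def hull {ι : Type*} (ω : ι → ℝ × ℝ) : Set (ℝ × ℝ) :=
  convexHull ℝ (Set.range ω ∪ {(1, 0), (0, 1)})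

lemma hull_finite {ι : Type*} [Finite ι] (ω : ι → ℝ × ℝ) :
    (Set.range ω ∪ {((1:ℝ), (0:ℝ)), (0, 1)}).Finite :=
  (Set.finite_range ω).union (by simp)

lemma hull_isCompact {ι : Type*} [Finite ι] (ω : ι → ℝ × ℝ) : IsCompact (hull ω) :=
  (hull_finite ω).isCompact_convexHull ℝ

lemma hull_comp {ι κ : Type*} (e : ι ≃ κ) (ω : κ → ℝ × ℝ) :
    hull (fun i => ω (e i)) = hull ω := by
  unfold hull
  have : Set.range (fun i => ω (e i)) = Set.range ω := e.surjective.range_comp ω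
  rw [this]

lemma convexHull_range_eq_image {ι : Type*} [Fintype ι] (v : ι → ℝ × ℝ) :
    convexHull ℝ (Set.range v) = (fun w : ι → ℝ => ∑ i, w i • v i) '' stdSimplex ℝ ι := by
  classical
  have h1 : (fun w : ι → ℝ => ∑ i, w i • v i) = ⇑(Fintype.linearCombination ℝ v) := by
    ext w <;> simp [Fintype.linearCombination_apply]
  rw [h1, ← convexHull_basis_eq_stdSimplex, LinearMap.image_convexHull, ← Set.range_comp]
  congr 2
  ext i <;> simp [Fintype.linearCombination_apply, Finset.sum_ite_eq, ite_smul]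

lemma isClosed_hull {ι : Type*} [Fintype ι] :
    IsClosed {z : (ι → ℝ × ℝ) × (ℝ × ℝ) | z.2 ∈ hull z.1} := by
  let cor : Fin 2 → ℝ × ℝ := ![(1, 0), (0, 1)]
  let ext (ω : ι → ℝ × ℝ) : ι ⊕ Fin 2 → ℝ × ℝ := Sum.elim ω cor
  have hr : ∀ ω, hull ω = convexHull ℝ (Set.range (ext ω)) := by
    intro ω
    simp only [hull, ext, Set.Sum.elim_range]
    congr 2
    ext p; simp [cor, or_comm]
  have : {z : (ι → ℝ × ℝ) × (ℝ × ℝ) | z.2 ∈ hull z.1}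
      = Prod.fst '' {y : ((ι → ℝ × ℝ) × (ℝ × ℝ)) × stdSimplex ℝ (ι ⊕ Fin 2) |
          ∑ i, (y.2 : ι ⊕ Fin 2 → ℝ) i • ext y.1.1 i = y.1.2} := by
    ext z
    simp only [Set.mem_ofPred_eq, hr, convexHull_range_eq_image, Set.mem_image]
    constructor
    · rintro ⟨w, hw, h⟩
      exact ⟨(z, ⟨w, hw⟩), h, rfl⟩
    · rintro ⟨⟨z', w⟩, h, rfl⟩
      exact ⟨w.1, w.2, h⟩
  rw [this]
  apply isClosedMap_fst_of_compactSpace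
  apply isClosed_eq
  · apply continuous_finsetSum
    rintro (i | i) _
    · simp only [ext, Sum.elim_inl]
      have : Continuous fun y : ((ι → ℝ × ℝ) × (ℝ × ℝ)) × stdSimplex ℝ (ι ⊕ Fin 2) =>
        (y.2 : ι ⊕ Fin 2 → ℝ) := continuous_subtype_val.comp continuous_snd
      exact ((continuous_apply _).comp this).smul (by fun_prop)
    · simp only [ext, Sum.elim_inr]
      have : Continuous fun y : ((ι → ℝ × ℝ) × (ℝ × ℝ)) × stdSimplex ℝ (ι ⊕ Fin 2) =>
        (y.2 : ι ⊕ Fin 2 → ℝ) := continuous_subtype_val.comp continuous_snd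
      exact ((continuous_apply _).comp this).smul continuous_const
  · fun_prop

/-- The event that every point with index in `S` lies in the hull of the others. -/
def evA {m : ℕ} (S : Finset (Fin m)) : Set (Fin m → ℝ × ℝ) :=
  {ω | ∀ i ∈ S, ω i ∈ hull (fun j : {j // ¬ j ∈ S} => ω j)}

lemma evA_meas {m : ℕ} (S : Finset (Fin m)) : MeasurableSet (evA S) := by
  apply IsClosed.measurableSet
  have : evA S = ⋂ i ∈ S, (fun ω : Fin m → ℝ × ℝ =>
      ((fun j : {j // ¬ j ∈ S} => ω j), ω i)) ⁻¹' {z | z.2 ∈ hull z.1} := by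
    ext ω; simp [evA]
  rw [this]
  refine isClosed_biInter fun i _ => isClosed_hull.preimage (by fun_prop)

lemma evA_prob (n k : ℕ) (S : Finset (Fin (n + k))) (hS : S.card = k) :
    P (n + k) (evA S) = ∫⁻ ω, (μT (hull ω)) ^ k ∂(P n) := by
  have mp := measurePreserving_piEquivPiSubtypeProd (fun _ : Fin (n + k) => μT) (fun i => i ∈ S)
  let B : Set (({i // i ∈ S} → ℝ × ℝ) × ({i // ¬ i ∈ S} → ℝ × ℝ)) :=
    {z | ∀ i, z.1 i ∈ hull z.2}
  have hB : MeasurableSet B := by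
    apply IsClosed.measurableSet
    have : B = ⋂ i, (fun z : ({i // i ∈ S} → ℝ × ℝ) × ({i // ¬ i ∈ S} → ℝ × ℝ) =>
        (z.2, z.1 i)) ⁻¹' {z | z.2 ∈ hull z.1} := by
      ext ω; simp [B]
    rw [this]
    exact isClosed_iInter fun i => isClosed_hull.preimage (by fun_prop)
  have hA : evA S = (MeasurableEquiv.piEquivPiSubtypeProd (fun _ : Fin (n + k) => ℝ × ℝ)
      (fun i => i ∈ S)) ⁻¹' B := by
    ext ω
    simp [evA, B, MeasurableEquiv.piEquivPiSubtypeProd]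
  rw [hA, P, mp.measure_preimage hB.nullMeasurableSet, Measure.prod_apply_symm hB]
  have hsec : ∀ y : {i // ¬ i ∈ S} → ℝ × ℝ,
      (@Measure.pi {i // i ∈ S} (fun _ => ℝ × ℝ) (Subtype.fintype fun i => i ∈ S) _
        (fun _ => μT)) ((fun x => (x, y)) ⁻¹' B) = (μT (hull y)) ^ k := by
    intro y
    have : ((fun x => (x, y)) ⁻¹' B) = Set.univ.pi (fun _ : {i // i ∈ S} => hull y) := by
      ext x; simp [B]
    rw [this, Subsingleton.elim (Subtype.fintype fun i => i ∈ S) (Finset.Subtype.fintype S),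
      Measure.pi_pi]
    simp [hS]
  refine (lintegral_congr hsec).trans ?_
  have hcard : Fintype.card (Fin n) = Fintype.card {i // ¬ i ∈ S} := by
    rw [Fintype.card_subtype_compl]; simp [hS]
  let f : Fin n ≃ {i // ¬ i ∈ S} := Fintype.equivOfCardEq hcard
  have mp2 := measurePreserving_piCongrLeft (fun _ : {i // ¬ i ∈ S} => μT) f
  rw [← mp2.lintegral_comp_emb (MeasurableEquiv.measurableEmbedding _)]
  unfold P
  apply lintegral_congr
  intro ω
  rw [← hull_comp f]
  congr 4
  ext i : 1
  exact Equiv.piCongrLeft_apply_apply (P := fun _ => ℝ × ℝ) f ω i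

lemma hull_subset_T {ι : Type*} {ω : ι → ℝ × ℝ} (h : ∀ i, ω i ∈ T) : hull ω ⊆ T := by
  apply convexHull_min
  · rintro p (⟨i, rfl⟩ | hp)
    · exact h i
    · apply subset_convexHull
      exact Set.mem_insert_of_mem _ hp
  · exact convex_convexHull ℝ _

lemma V_eq {n : ℕ} {ω : Fin n → ℝ × ℝ} (h : ∀ i, ω i ∈ T) : V n ω = (μT (hull ω)).toReal := by
  rw [μT, Measure.smul_apply, Measure.restrict_apply (hull_isCompact ω).measurableSet,
    Set.inter_eq_left.2 (hull_subset_T h)]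
  simp [V, Tchain, hull]

lemma ae_T (n : ℕ) : ∀ᵐ ω ∂(P n), ∀ i, ω i ∈ T := by
  rw [ae_all_iff]
  intro i
  exact (measurePreserving_eval (fun _ : Fin n => μT) i).quasiMeasurePreserving.ae μT_ae_T

lemma ae_ne (n : ℕ) (p : ℝ × ℝ) : ∀ᵐ ω ∂(P n), ∀ i, ω i ≠ p := by
  rw [ae_all_iff]
  intro i
  refine (measurePreserving_eval (fun _ : Fin n => μT) i).quasiMeasurePreserving.ae
    (p := fun x => x ≠ p) ?_
  rw [ae_iff]; simp

lemma ae_inj (n : ℕ) : ∀ᵐ ω ∂(P n), Function.Injective ω := by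
  have : ∀ᵐ ω ∂(P n), ∀ i j, i ≠ j → ω i ≠ ω j := by
    rw [ae_all_iff]; intro i
    rw [ae_all_iff]; intro j
    by_cases hij : i = j
    · simp [hij]
    have hind := (ProbabilityTheory.iIndepFun_pi (μ := fun _ : Fin n => μT)
      (X := fun _ x => x) (fun _ => aemeasurable_id)).indepFun hij
    have hm := hind.map_prod_eq_prod_map_map (measurable_pi_apply i).aemeasurable
      (measurable_pi_apply j).aemeasurable
    have e : ∀ i : Fin n, Measure.map (fun ω : Fin n → ℝ × ℝ => ω i)
      (Measure.pi fun _ => μT) = μT := fun i => (measurePreserving_eval (fun _ => μT) i).map_eq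
    rw [e, e] at hm
    have hd : ∀ᵐ z ∂(μT.prod μT), z.1 ≠ z.2 := by
      rw [ae_iff]
      have hms : MeasurableSet {z : (ℝ × ℝ) × (ℝ × ℝ) | ¬ z.1 ≠ z.2} := by
        simp only [ne_eq, not_not]
        exact (isClosed_eq continuous_fst continuous_snd).measurableSet
      rw [Measure.measure_prod_null hms]
      refine Filter.Eventually.of_forall fun x => ?_
      have : Prod.mk x ⁻¹' {z : (ℝ × ℝ) × (ℝ × ℝ) | ¬ z.1 ≠ z.2} = {x} := by
        ext y; simp [eq_comm]
      simp only [this]; simp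
    rw [← hm] at hd
    have := ae_of_ae_map (by fun_prop) hd
    filter_upwards [this] with ω h _ using h
  filter_upwards [this] with ω h i j hij
  by_contra hne
  exact h i j hne hij

lemma corner_extreme {p : ℝ × ℝ} (hp : p ∈ ({(1, 0), (0, 1)} : Set (ℝ × ℝ))) :
    p ∈ T.extremePoints ℝ := by
  have hpT : p ∈ T := subset_convexHull _ _ (Set.mem_insert_of_mem _ hp)
  rw [mem_extremePoints]
  refine ⟨hpT, ?_⟩
  rw [T_eq]
  rintro ⟨x1, x2⟩ ⟨hx1, hx2, hx⟩ ⟨y1, y2⟩ ⟨hy1, hy2, hy⟩ ⟨a, b, ha, hb, hab, h⟩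
  simp only [Set.mem_insert_iff, Set.mem_singleton_iff] at hp
  simp only at hx1 hx2 hx hy1 hy2 hy
  have h1 := congrArg Prod.fst h
  have h2 := congrArg Prod.snd h
  simp only [Prod.fst_add, Prod.snd_add, Prod.smul_fst, Prod.smul_snd, smul_eq_mul] at h1 h2
  rcases hp with rfl | rfl
  · simp only at h1 h2
    have ex2 : x2 = 0 := by nlinarith [mul_nonneg ha.le hx2, mul_nonneg hb.le hy2]
    have ey2 : y2 = 0 := by nlinarith [mul_nonneg ha.le hx2, mul_nonneg hb.le hy2]
    have ex1 : x1 = 1 := by nlinarith [mul_le_mul_of_nonneg_left hx ha.le, mul_le_mul_of_nonneg_left hy hb.le]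
    have ey1 : y1 = 1 := by nlinarith [mul_le_mul_of_nonneg_left hx ha.le, mul_le_mul_of_nonneg_left hy hb.le]
    simp [*]
  · simp only at h1 h2
    have ex2 : x1 = 0 := by nlinarith [mul_nonneg ha.le hx1, mul_nonneg hb.le hy1]
    have ey2 : y1 = 0 := by nlinarith [mul_nonneg ha.le hx1, mul_nonneg hb.le hy1]
    have ex1 : x2 = 1 := by nlinarith [mul_le_mul_of_nonneg_left hx ha.le, mul_le_mul_of_nonneg_left hy hb.le]
    have ey1 : y2 = 1 := by nlinarith [mul_le_mul_of_nonneg_left hx ha.le, mul_le_mul_of_nonneg_left hy hb.le]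
    simp [*]

lemma hull_mono {ι κ : Type*} {ω : ι → ℝ × ℝ} {ω' : κ → ℝ × ℝ}
    (h : Set.range ω ⊆ Set.range ω') : hull ω ⊆ hull ω' :=
  convexHull_mono (Set.union_subset_union_left _ h)

lemma mem_evA_iff {m : ℕ} {ω : Fin m → ℝ × ℝ} (hinj : Function.Injective ω)
    (hc : ∀ i, ω i ∉ ({(1, 0), (0, 1)} : Set (ℝ × ℝ))) (S : Finset (Fin m)) :
    ω ∈ evA S ↔ ∀ i ∈ S, ω i ∉ (hull ω).extremePoints ℝ := by
  have hsub : hull (fun j : {j // ¬ j ∈ S} => ω j) ⊆ hull ω :=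
    hull_mono (by rintro _ ⟨j, rfl⟩; exact ⟨j, rfl⟩)
  constructor
  · intro h i hi hext
    have h1 := inter_extremePoints_subset_extremePoints_of_subset hsub ⟨h i hi, hext⟩
    have h2 := extremePoints_convexHull_subset h1
    rcases h2 with ⟨j, hj⟩ | h2
    · exact j.2 (by rw [hinj hj]; exact hi)
    · exact hc i h2
  · intro h i hi
    have hKM := closure_convexHull_extremePoints (hull_isCompact ω) (convex_convexHull ℝ _)
    have hi' : ω i ∈ hull ω := subset_convexHull _ _ (Or.inl ⟨i, rfl⟩)
    rw [← hKM] at hi'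
    refine closure_minimal ?_ (hull_isCompact _).isClosed hi'
    apply convexHull_mono
    intro p hp
    rcases extremePoints_convexHull_subset hp with ⟨j, rfl⟩ | h2
    · exact Or.inl ⟨⟨j, fun hj => h j hj hp⟩, rfl⟩
    · exact Or.inr h2

open Classical in
/-- Number of points not in the hull of the others. -/
def Nalt (m : ℕ) (ω : Fin m → ℝ × ℝ) : ℕ :=
  (Finset.univ.filter fun i : Fin m => ω ∉ evA {i}).card

lemma Nalt_le (m : ℕ) (ω : Fin m → ℝ × ℝ) : Nalt m ω ≤ m := by
  unfold Nalt
  exact (Finset.card_le_univ _).trans (by simp)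

lemma Nalt_meas (m : ℕ) : Measurable (Nalt m) := by
  classical
  have : Nalt m = fun ω => ∑ i : Fin m, if ω ∉ evA {i} then 1 else 0 := by
    ext ω; simp only [Nalt, Finset.card_filter]
  rw [this]
  refine Finset.measurable_sum _ fun i _ => ?_
  exact Measurable.ite (evA_meas {i}).compl measurable_const measurable_const

lemma N_eq_Nalt {m : ℕ} {ω : Fin m → ℝ × ℝ} (hinj : Function.Injective ω)
    (hc : ∀ i, ω i ∉ ({(1, 0), (0, 1)} : Set (ℝ × ℝ))) (hT : ∀ i, ω i ∈ T) :
    N m ω = Nalt m ω := by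
  classical
  have hE : (hull ω).extremePoints ℝ =
      (((Finset.univ.filter fun i : Fin m => ω ∉ evA {i}).image ω ∪
        {((1:ℝ), (0:ℝ)), (0, 1)} : Finset (ℝ × ℝ)) : Set (ℝ × ℝ)) := by
    ext p
    simp only [Finset.coe_union, Finset.coe_image, Finset.coe_filter, Finset.mem_univ, true_and,
      Finset.coe_insert, Finset.coe_singleton, mem_evA_iff hinj hc, Finset.mem_singleton,
      forall_eq, not_not]
    constructor
    · intro hp
      rcases extremePoints_convexHull_subset hp with ⟨j, rfl⟩ | h2
      · exact Or.inl ⟨j, hp, rfl⟩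
      · exact Or.inr h2
    · rintro (⟨j, hp, rfl⟩ | h2)
      · exact hp
      · exact inter_extremePoints_subset_extremePoints_of_subset (hull_subset_T hT)
          ⟨subset_convexHull _ _ (Or.inr h2), corner_extreme h2⟩
  have : N m ω = ((hull ω).extremePoints ℝ).ncard - 2 := rfl
  rw [this, hE, Set.ncard_coe_finset, Finset.card_union_of_disjoint,
    Finset.card_image_of_injective _ hinj, Finset.card_pair (by simp)]
  · rfl
  · rw [Finset.disjoint_left]
    intro p hp hp2
    obtain ⟨i, _, rfl⟩ := Finset.mem_image.1 hp
    exact hc i (by simpa using hp2)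

lemma count_eq {m : ℕ} {ω : Fin m → ℝ × ℝ} (hinj : Function.Injective ω)
    (hc : ∀ i, ω i ∉ ({(1, 0), (0, 1)} : Set (ℝ × ℝ))) (k : ℕ) :
    ((m - Nalt m ω).choose k : ℝ) =
      ∑ S ∈ (Finset.univ : Finset (Fin m)).powersetCard k,
        (evA S).indicator (fun _ => (1:ℝ)) ω := by
  classical
  have h1 : m - Nalt m ω = (Finset.univ.filter fun i : Fin m => ω ∈ evA {i}).card := by
    have := Finset.card_filter_add_card_filter_not (s := (Finset.univ : Finset (Fin m)))
      (fun i : Fin m => ω ∈ evA {i})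
    rw [Finset.card_univ, Fintype.card_fin] at this
    unfold Nalt
    have e : (Finset.univ.filter fun i : Fin m => ω ∉ evA {i}).card
      = (Finset.univ.filter fun i : Fin m => ¬ ω ∈ evA {i}).card := rfl
    omega
  rw [h1, ← Finset.card_powersetCard]
  simp only [Set.indicator_apply, Finset.sum_ite, Finset.sum_const_zero, add_zero,
    Finset.sum_const, nsmul_eq_mul, mul_one]
  norm_cast
  congr 1
  ext S
  simp only [Finset.mem_powersetCard, Finset.mem_filter, Finset.subset_univ, true_and,
    mem_evA_iff hinj hc, Finset.mem_singleton, forall_eq, Finset.subset_iff, Finset.mem_univ]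
  tauto

lemma ae_good (m : ℕ) : ∀ᵐ ω ∂(P m), Function.Injective ω ∧
    (∀ i, ω i ∉ ({(1, 0), (0, 1)} : Set (ℝ × ℝ))) ∧ ∀ i, ω i ∈ T := by
  filter_upwards [ae_inj m, ae_ne m (1, 0), ae_ne m (0, 1), ae_T m] with ω h1 h2 h3 h4
  exact ⟨h1, fun i => by simp [h2 i, h3 i], h4⟩

lemma evA_real (n k : ℕ) (S : Finset (Fin (n + k))) (hS : S.card = k) :
    (P (n + k)).real (evA S) = ∫ ω, (V n ω) ^ k ∂ P n := by
  have hcongr : (fun ω => (V n ω) ^ k) =ᵐ[P n] fun ω => ((μT (hull ω)) ^ k).toReal := by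
    filter_upwards [ae_T n] with ω h
    rw [V_eq h, ENNReal.toReal_pow]
  have hmeas : Measurable fun ω : Fin n → ℝ × ℝ => μT (hull ω) :=
    measurable_measure_prodMk_left (ν := μT) (isClosed_hull (ι := Fin n)).measurableSet
  rw [integral_congr_ae hcongr, integral_toReal (hmeas.pow_const k).aemeasurable
    (Filter.Eventually.of_forall fun ω => ENNReal.pow_lt_top (measure_lt_top _ _)),
    ← evA_prob n k S hS]
  rfl

lemma main1 (n k : ℕ) : ((n + k).choose k : ℝ) * ∫ ω, (V n ω) ^ k ∂ P n
      = ∫ ω, (((n + k - Nalt (n + k) ω).choose k : ℝ)) ∂ P (n + k) := by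
  have : (fun ω => (((n + k - Nalt (n + k) ω).choose k : ℝ))) =ᵐ[P (n + k)]
      fun ω => ∑ S ∈ (Finset.univ : Finset (Fin (n + k))).powersetCard k,
        (evA S).indicator (fun _ => (1:ℝ)) ω := by
    filter_upwards [ae_good (n + k)] with ω h using count_eq h.1 h.2.1 k
  rw [integral_congr_ae this, integral_finsetSum]
  · rw [Finset.sum_congr rfl (g := fun _ => ∫ ω, (V n ω) ^ k ∂ P n)]
    · simp
    · intro S hS
      rw [integral_indicator_const _ (evA_meas S), evA_real n k S (Finset.mem_powersetCard.1 hS).2]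
      simp
  · intro S _
    exact (integrable_const _).indicator (evA_meas S)

lemma ae_N (m : ℕ) : ∀ᵐ ω ∂(P m), N m ω = Nalt m ω := by
  filter_upwards [ae_good m] with ω h using N_eq_Nalt h.1 h.2.1 h.2.2

lemma main2 (m k : ℕ) : ∫ ω, (((m - Nalt m ω).choose k : ℝ)) ∂ P m =
    ∑ i ∈ Finset.range (m + 1), ((m - i).choose k : ℝ) * (P m {ω | Nalt m ω = i}).toReal := by
  classical
  have h : ∀ ω, (((m - Nalt m ω).choose k : ℝ)) = ∑ i ∈ Finset.range (m + 1),
      {ω | Nalt m ω = i}.indicator (fun _ => ((m - i).choose k : ℝ)) ω := by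
    intro ω
    simp only [Set.indicator_apply, Set.mem_ofPred_eq]
    rw [Finset.sum_ite_eq, if_pos (by have := Nalt_le m ω; simp; omega)]
  have hm : ∀ i, MeasurableSet {ω | Nalt m ω = i} := fun i =>
    Nalt_meas m (measurableSet_singleton i)
  simp_rw [h]
  rw [integral_finsetSum]
  · refine Finset.sum_congr rfl fun i _ => ?_
    rw [integral_indicator_const _ (hm i), smul_eq_mul, mul_comm]
    rfl
  · intro i _
    exact (integrable_const _).indicator (hm i)

/-- `C(n+k,k) E[V_n^k] = E[C(n+k-N_{n+k},k)]`, equivalently the sum over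
the distribution of `N_{n+k}`. -/
theorem stmt0 (n k : ℕ) :
    (((n + k).choose k : ℝ) * ∫ ω, (V n ω) ^ k ∂ P n
      = ∫ ω, (((n + k - N (n + k) ω).choose k : ℝ)) ∂ P (n + k)) ∧
    (((n + k).choose k : ℝ) * ∫ ω, (V n ω) ^ k ∂ P n
      = ∑ i ∈ Finset.range (n + k + 1),
          ((n + k - i).choose k : ℝ) * (P (n + k) {ω | N (n + k) ω = i}).toReal) := by
  have e1 : ∫ ω, (((n + k - N (n + k) ω).choose k : ℝ)) ∂ P (n + k)
      = ∫ ω, (((n + k - Nalt (n + k) ω).choose k : ℝ)) ∂ P (n + k) := by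
    apply integral_congr_ae
    filter_upwards [ae_N (n + k)] with ω h
    rw [h]
  have e2 : ∀ i, P (n + k) {ω | N (n + k) ω = i} = P (n + k) {ω | Nalt (n + k) ω = i} := by
    intro i
    apply measure_congr
    filter_upwards [ae_N (n + k)] with ω h
    exact congrArg (· = i) h
  refine ⟨by rw [e1, main1], ?_⟩
  simp_rw [e2]
  rw [main1, main2]

end
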